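/- Assume a is not a norm from L, and assume E = F(s) where s ∈ E satisfies s² = −d for some d ∈ F and s ∉ F. If g = g(l0,l1,l2) is special unitary, g has finite order in the multiplicative monoid of 3×3 matrices over L, and the order of g is even, then g is the identity matrix. In particular, no special unitary g ≠ 1 satisfies g² = 1; there are no reflections among the special unitary elements. -/

import Mathlib

/-!
The matrices `gmat ρ a l0 l1 l2` form the cyclic algebra `D = L ⊕ Lz ⊕ Lz²` with `z³ = a`. When `a`
is not a norm from `L`, a nonzero element of `D` acts with rank at least two
(`gmat_two_le_rank`): if its rows were all proportional to the first row `u`, then the semilinear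
operator `T (x0, x1, x2) = (a ρ(x2), ρ(x0), ρ(x1))`, which sends `u` to the second row, would
satisfy `T u = c u`, and `T³ = a` would give `a = N(c)`.

If `h ∈ D` satisfies `h² = 1`, then `(h + 1)(h - 1) = 0` in `3 × 3` matrices, so the ranks of
`h + 1` and `h - 1` add up to at most three. One of them is therefore zero, i.e. `h = ±1`, and
`det h = 1` excludes `-1` because the size is odd (`eq_one_of_sq_eq_one`).
Finally `D` is closed under products, so an element `g` of determinant one and of finite even order
`2k` would have `g ^ k` as an involution of determinant one, hence `g ^ k = 1`, contradicting the
order. Thus no special unitary element has even order.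
-/

open Matrix NumberField IsDedekindDomain

noncomputable section

section Defs

variable {L : Type*} [Field L]

/-- The matrix `g(l0,l1,l2)` of the cyclic presentation `D = L ⊕ Lz ⊕ Lz²`. -/
def gmat (ρ : L → L) (a l0 l1 l2 : L) : Matrix (Fin 3) (Fin 3) L :=
  !![l0, l1, l2;
     a * ρ l2, ρ l0, ρ l1;
     a * ρ (ρ l1), a * ρ (ρ l2), ρ (ρ l0)]

/-- The norm `N_{L/E}(x) = x·ρ(x)·ρ²(x)`. -/
def NormLE (ρ : L → L) (x : L) : L := x * ρ x * ρ (ρ x)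

/-- The trace `Tr_{L/E}(x) = x + ρ(x) + ρ²(x)`. -/
def TrLE (ρ : L → L) (x : L) : L := x + ρ x + ρ (ρ x)

/-- The unitary conditions (U1) and (U2) on the coefficients `(l0,l1,l2)`. -/
def IsUnitaryCoeffs (ρ τ : L → L) (a b l0 l1 l2 : L) : Prop :=
  l0 * τ l0 + ρ b * (l1 * τ l1) + ρ b * ρ (ρ b) * (l2 * τ l2) = 1 ∧
  a * τ l0 * ρ l2 + ρ b * τ l1 * ρ l0 + ρ b * ρ (ρ b) * τ l2 * ρ l1 = 0

/-- The unitary conditions together with the determinant condition (Det). -/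
def IsSpecialUnitaryCoeffs (ρ τ : L → L) (a b l0 l1 l2 : L) : Prop :=
  IsUnitaryCoeffs ρ τ a b l0 l1 l2 ∧
  NormLE ρ l0 + a * NormLE ρ l1 + a ^ 2 * NormLE ρ l2
    - a * TrLE ρ (l0 * ρ l1 * ρ (ρ l2)) = 1

/-- The involution of the second kind, on coefficients, realized as a matrix:
`α(g(l0,l1,l2)) = g(τ l0, a⁻¹·b·ρ²(b)·ρ(τ l2), a⁻¹·b·ρ²(τ l1))`. -/
def alphaMat (ρ τ : L → L) (a b l0 l1 l2 : L) : Matrix (Fin 3) (Fin 3) L :=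
  gmat ρ a (τ l0) (a⁻¹ * b * ρ (ρ b) * ρ (τ l2)) (a⁻¹ * b * ρ (ρ (τ l1)))

end Defs

section Helpers

variable {L : Type*} [Field L]

theorem gmat_add_one (r : L →+* L) (a l0 l1 l2 : L) :
    gmat r a l0 l1 l2 + 1 = gmat r a (l0 + 1) l1 l2 := by
  ext i j
  fin_cases i <;> fin_cases j <;> simp [gmat]

theorem gmat_sub_one (r : L →+* L) (a l0 l1 l2 : L) :
    gmat r a l0 l1 l2 - 1 = gmat r a (l0 - 1) l1 l2 := by
  ext i j
  fin_cases i <;> fin_cases j <;> simp [gmat]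

theorem gmat_mul (r : L →+* L) (hr : ∀ x, r (r (r x)) = x) (a : L) (ha : r a = a)
    (x0 x1 x2 y0 y1 y2 : L) :
    gmat r a x0 x1 x2 * gmat r a y0 y1 y2 =
      gmat r a (x0 * y0 + x1 * (a * r y2) + x2 * (a * r (r y1)))
        (x0 * y1 + x1 * r y0 + x2 * (a * r (r y2)))
        (x0 * y2 + x1 * r y1 + x2 * r (r y0)) := by
  ext i j
  fin_cases i <;> fin_cases j <;>
    simp [gmat, Matrix.mul_apply, Fin.sum_univ_three, hr, ha] <;> ring

theorem gmat_pow (r : L →+* L) (hr : ∀ x, r (r (r x)) = x) (a : L) (ha : r a = a)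
    (l0 l1 l2 : L) (n : ℕ) :
    ∃ m0 m1 m2 : L, gmat r a l0 l1 l2 ^ n = gmat r a m0 m1 m2 := by
  induction n with
  | zero =>
    refine ⟨1, 0, 0, ?_⟩
    ext i j
    fin_cases i <;> fin_cases j <;> simp [gmat]
  | succ n ih =>
    obtain ⟨m0, m1, m2, h⟩ := ih
    rw [pow_succ, h, gmat_mul r hr a ha]
    exact ⟨_, _, _, rfl⟩

theorem gmat_det (r : L →+* L) (hr : ∀ x, r (r (r x)) = x) (a l0 l1 l2 : L) :
    (gmat r a l0 l1 l2).det =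
      NormLE r l0 + a * NormLE r l1 + a ^ 2 * NormLE r l2
        - a * TrLE r (l0 * r l1 * r (r l2)) := by
  simp [gmat, Matrix.det_fin_three, NormLE, TrLE, hr]
  ring

/-- If the second row of `gmat` is `c` times the first one, then `a` is the norm of `c` unless the
matrix vanishes. -/
theorem norm_eq_of_proportional (r : L →+* L) (hr : ∀ x, r (r (r x)) = x) (a : L) (ha : r a = a)
    (m0 m1 m2 c : L) (h0 : a * r m2 = c * m0) (h1 : r m0 = c * m1) (h2 : r m1 = c * m2)
    (hm : ¬(m0 = 0 ∧ m1 = 0 ∧ m2 = 0)) : NormLE r c = a := by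
  have hm2 : m2 ≠ 0 := by
    intro h
    have e1 : m1 = 0 := by
      rw [h, mul_zero] at h2
      exact (map_eq_zero r).1 h2
    have e0 : m0 = 0 := by
      rw [e1, mul_zero] at h1
      exact (map_eq_zero r).1 h1
    exact hm ⟨e0, e1, h⟩
  have h3 : a * m2 = r (r c) * r (r m0) := by
    have := congrArg (fun x => r (r x)) h0
    simpa [hr, ha] using this
  rw [h1, map_mul, h2] at h3
  apply mul_right_cancel₀ hm2
  rw [h3, NormLE]
  ring

theorem gmat_two_le_rank (r : L →+* L) (hr : ∀ x, r (r (r x)) = x) (a : L) (ha : r a = a)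
    (hnn : ¬∃ x : L, NormLE r x = a) (m0 m1 m2 : L) (hM : gmat r a m0 m1 m2 ≠ 0) :
    2 ≤ (gmat r a m0 m1 m2).rank := by
  by_contra! hlt
  have hm : ¬(m0 = 0 ∧ m1 = 0 ∧ m2 = 0) := by
    rintro ⟨rfl, rfl, rfl⟩
    apply hM
    ext i j
    fin_cases i <;> fin_cases j <;> simp [gmat]
  set M := gmat r a m0 m1 m2 with hMdef
  rw [Matrix.rank_eq_finrank_span_row] at hlt
  obtain ⟨v, hv⟩ := finrank_le_one_iff.1 (Nat.lt_succ_iff.1 hlt)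
  obtain ⟨p, hp⟩ := hv ⟨M.row 0, Submodule.subset_span ⟨0, rfl⟩⟩
  obtain ⟨q, hq⟩ := hv ⟨M.row 1, Submodule.subset_span ⟨1, rfl⟩⟩
  have hp' : ∀ j, p * (v : Fin 3 → L) j = M 0 j := fun j =>
    congrFun (congrArg Subtype.val hp) j
  have hq' : ∀ j, q * (v : Fin 3 → L) j = M 1 j := fun j =>
    congrFun (congrArg Subtype.val hq) j
  have p0 := hp' 0
  have p1 := hp' 1
  have p2 := hp' 2
  have q0 := hq' 0
  have q1 := hq' 1
  have q2 := hq' 2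
  simp only [hMdef, gmat, Matrix.of_apply, Matrix.cons_val] at p0 p1 p2 q0 q1 q2
  have hp0 : p ≠ 0 := by
    rintro rfl
    simp only [zero_mul] at p0 p1 p2
    exact hm ⟨p0.symm, p1.symm, p2.symm⟩
  refine hnn ⟨q / p, norm_eq_of_proportional r hr a ha m0 m1 m2 (q / p) ?_ ?_ ?_ hm⟩
  · rw [← q0, ← p0]; field_simp
  · rw [← q1, ← p1]; field_simp
  · rw [← q2, ← p2]; field_simp

theorem rank_add_rank_le_of_mul_eq_zero (A B : Matrix (Fin 3) (Fin 3) L) (h : A * B = 0) :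
    A.rank + B.rank ≤ 3 := by
  have hle : LinearMap.range B.mulVecLin ≤ LinearMap.ker A.mulVecLin := by
    rintro _ ⟨v, rfl⟩
    simp [h]
  have h1 := Submodule.finrank_mono hle
  have h2 := LinearMap.finrank_range_add_finrank_ker A.mulVecLin
  rw [Module.finrank_fin_fun] at h2
  unfold Matrix.rank
  omega

theorem eq_one_of_sq_eq_one [CharZero L] (r : L →+* L) (hr : ∀ x, r (r (r x)) = x) (a : L)
    (ha : r a = a) (hnn : ¬∃ x : L, NormLE r x = a) (m0 m1 m2 : L)
    (hdet : (gmat r a m0 m1 m2).det = 1) (hsq : gmat r a m0 m1 m2 ^ 2 = 1) :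
    gmat r a m0 m1 m2 = 1 := by
  by_contra hne
  have hprod : (gmat r a m0 m1 m2 + 1) * (gmat r a m0 m1 m2 - 1) = 0 := by
    have : (gmat r a m0 m1 m2 + 1) * (gmat r a m0 m1 m2 - 1) = gmat r a m0 m1 m2 ^ 2 - 1 := by
      noncomm_ring
    rw [this, hsq, sub_self]
  have hrk := rank_add_rank_le_of_mul_eq_zero _ _ hprod
  have hplus : gmat r a m0 m1 m2 + 1 ≠ 0 := by
    intro h
    rw [eq_neg_of_add_eq_zero_left h, Matrix.det_neg, Matrix.det_one, Fintype.card_fin] at hdet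
    norm_num at hdet
  have hminus : gmat r a m0 m1 m2 - 1 ≠ 0 := sub_ne_zero.2 hne
  rw [gmat_add_one] at hplus hrk
  rw [gmat_sub_one] at hminus hrk
  have h1 := gmat_two_le_rank r hr a ha hnn _ _ _ hplus
  have h2 := gmat_two_le_rank r hr a ha hnn _ _ _ hminus
  omega

end Helpers

theorem stmt_11
    {F L : Type*} [Field F] [NumberField F] [Field L] [NumberField L]
    [Algebra F L] [IsGalois F L] [FiniteDimensional F L]
    (σ : L ≃ₐ[F] L) (hgen : ∀ g : L ≃ₐ[F] L, g ∈ Subgroup.zpowers σ)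
    (hord : orderOf σ = 6)
    (ρ τ : L → L) (hρ : ∀ x, ρ x = (σ ^ 2) x) (hτ : ∀ x, τ x = (σ ^ 3) x)
    (a b : L) (ha : a ≠ 0) (hb : b ≠ 0)
    (haE : ρ a = a) (hbM : τ b = b)
    (hab : a * τ a = b * ρ b * ρ (ρ b))
    (hnn : ¬∃ x : L, NormLE ρ x = a)
    (s : L) (d : F) (hsE : ρ s = s) (hs2 : s ^ 2 = -algebraMap F L d)
    (hsF : s ∉ Set.range (algebraMap F L)) :
    ∀ l0 l1 l2 : L, IsSpecialUnitaryCoeffs ρ τ a b l0 l1 l2 →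
      (IsOfFinOrder (gmat ρ a l0 l1 l2) → Even (orderOf (gmat ρ a l0 l1 l2)) →
        gmat ρ a l0 l1 l2 = 1) ∧
      (gmat ρ a l0 l1 l2 ^ 2 = 1 → gmat ρ a l0 l1 l2 = 1) := by
  obtain ⟨r, rfl⟩ : ∃ r : L →+* L, ρ = ⇑r :=
    ⟨((σ ^ 2 : L ≃ₐ[F] L) : L →+* L), funext hρ⟩
  have hr : ∀ x, r (r (r x)) = x := fun x => by
    rw [hρ, hρ, hρ, ← AlgEquiv.mul_apply, ← AlgEquiv.mul_apply, ← pow_add, ← pow_add,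
      show 2 + 2 + 2 = 6 from rfl, ← hord, pow_orderOf_eq_one, AlgEquiv.one_apply]
  intro l0 l1 l2 hsu
  have hdet : (gmat r a l0 l1 l2).det = 1 := (gmat_det r hr a l0 l1 l2).trans hsu.2
  refine ⟨fun hfin heven => ?_, eq_one_of_sq_eq_one r hr a haE hnn l0 l1 l2 hdet⟩
  exfalso
  obtain ⟨k, hk⟩ := heven
  have hpos := hfin.orderOf_pos
  obtain ⟨m0, m1, m2, hm⟩ := gmat_pow r hr a haE l0 l1 l2 k
  have hpow : gmat r a l0 l1 l2 ^ k = 1 := by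
    rw [hm]
    apply eq_one_of_sq_eq_one r hr a haE hnn
    · rw [← hm, Matrix.det_pow, hdet, one_pow]
    · rw [← hm, ← pow_mul, mul_two, ← hk, pow_orderOf_eq_one]
  have hle := orderOf_le_of_pow_eq_one (by omega) hpow
  omega
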